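/- Under condition H1, if (ρ_t)_{t∈(0,1]} and ρ are Borel probability measures on ℝ whose characteristic functions equal exp(ψ_{α,t}(λ)) and exp(ψ_{α,C±}(λ)) respectively (for all λ ∈ ℝ), then ρ_t converges weakly to ρ as t → 0+. -/

import Mathlib

open MeasureTheory Real Filter Set Topology

/-- The `α`-stable Lévy density with constants `Cp` (for `u > 0`) and `Cm` (for `u < 0`). -/
noncomputable def stableDensity (α Cp Cm : ℝ) (u : ℝ) : ℝ :=
  if 0 < u then Cp * |u| ^ (-α - 1) else Cm * |u| ^ (-α - 1)

/-- The characteristic exponent `ψ_{α,t}(λ)` of the rescaled locally stable process. -/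
noncomputable def psiT (m : ℝ → ℝ) (α t lam : ℝ) : ℂ :=
  (t : ℂ) * ∫ u : ℝ,
    (Complex.exp (Complex.I * ((lam * t ^ (-1 / α) * u : ℝ) : ℂ)) - 1 -
      Complex.I * ((lam * t ^ (-1 / α) * u : ℝ) : ℂ) *
        (if |u| ≤ t ^ (1 / α) then (1 : ℂ) else 0)) * ((m u : ℝ) : ℂ)

/-- The limiting `α`-stable characteristic exponent `ψ_{α,C±}(λ)`. -/
noncomputable def psiLimit (α Cp Cm lam : ℝ) : ℂ :=
  ∫ v : ℝ,
    (Complex.exp (Complex.I * ((lam * v : ℝ) : ℂ)) - 1 -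
      Complex.I * ((lam * v : ℝ) : ℂ) * (if |v| ≤ 1 then (1 : ℂ) else 0)) *
      ((stableDensity α Cp Cm v : ℝ) : ℂ)

/-!
Put `t = s ^ α`. The substitution `u = s v` turns `ψ_{α,t}` into the integral of the fixed kernel
`v ↦ exp (iλv) - 1 - iλv 1_{|v| ≤ 1}`, which is `O(min 1 v²)`, against the density
`s ^ (α + 1) m (s v)`. By H1 this density converges pointwise to the stable density as `s → 0+`.
On a small ball `|s v| ≤ δ` it is moreover dominated by a multiple of `|v| ^ (-α - 1)`, so dominated
convergence applies there, while the jumps with `|u| > δ` have finite total mass and therefore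
contribute only `O(s ^ α)`. Thus the characteristic functions converge pointwise, and Lévy's
continuity theorem gives weak convergence.
-/

theorem tendsto_rpow_nhdsGT_zero {a : ℝ} (ha : 0 < a) :
    Tendsto (fun t : ℝ => t ^ a) (𝓝[>] 0) (𝓝[>] 0) := by
  refine tendsto_nhdsWithin_iff.2 ⟨?_, ?_⟩
  · have h := ((continuous_rpow_const ha.le).tendsto 0).mono_left (nhdsWithin_le_nhds (s := Ioi 0))
    rwa [zero_rpow ha.ne'] at h
  · filter_upwards [self_mem_nhdsWithin] with t ht using rpow_pos_of_pos ht a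

theorem tendsto_probabilityMeasure_of_tendsto_charFun {ι E : Type*} {l : Filter ι}
    [l.IsCountablyGenerated] [NormedAddCommGroup E] [InnerProductSpace ℝ E] [FiniteDimensional ℝ E]
    [MeasurableSpace E] [BorelSpace E] {μ : ι → ProbabilityMeasure E} {μ₀ : ProbabilityMeasure E}
    (h : ∀ ξ : E, Tendsto (fun i => charFun (μ i) ξ) l (𝓝 (charFun μ₀ ξ))) :
    Tendsto μ l (𝓝 μ₀) :=
  tendsto_of_seq_tendsto fun _ hx =>
    ProbabilityMeasure.tendsto_of_tendsto_charFun fun ξ => (h ξ).comp hx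

theorem charFun_eq_integral_exp_I_mul (μ : Measure ℝ) (ξ : ℝ) :
    charFun μ ξ = ∫ x : ℝ, Complex.exp (Complex.I * ((ξ * x : ℝ) : ℂ)) ∂μ := by
  simp only [charFun_apply_real, Complex.ofReal_mul, mul_comm Complex.I]

theorem integrable_min_one_sq_mul_abs_rpow {α : ℝ} (hα : α ∈ Ioo (0 : ℝ) 2) :
    Integrable fun v : ℝ => min 1 (v ^ 2) * |v| ^ (-α - 1) := by
  suffices h : IntegrableOn (fun y : ℝ => min 1 (y ^ 2) * y ^ (-α - 1)) (Ioi 0) by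
    have h_norm := (integrable_fun_norm_addHaar (volume : Measure ℝ)
      (f := fun y : ℝ => min 1 (y ^ 2) * y ^ (-α - 1))).2 (by simpa using h)
    simpa only [norm_eq_abs, sq_abs] using h_norm
  rw [← Ioc_union_Ioi_eq_Ioi (zero_le_one' ℝ)]
  refine IntegrableOn.union ?near_zero ?at_infinity
  case near_zero =>
    have h : IntegrableOn (fun y : ℝ => y ^ (1 - α)) (Ioc 0 1) :=
      (intervalIntegral.intervalIntegrable_rpow' (by linarith [hα.2])).1
    refine h.congr_fun (fun y hy => ?_) measurableSet_Ioc
    have hy1 : y ^ 2 ≤ 1 := pow_le_one₀ hy.1.le hy.2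
    calc y ^ (1 - α) = y ^ ((2 : ℕ) + (-α - 1)) := by
          congr 1
          push_cast
          ring
      _ = min 1 (y ^ 2) * y ^ (-α - 1) := by rw [min_eq_right hy1, rpow_add hy.1, rpow_natCast]
  case at_infinity =>
    have h : IntegrableOn (fun y : ℝ => y ^ (-α - 1)) (Ioi 1) :=
      integrableOn_Ioi_rpow_of_lt (by linarith [hα.1]) one_pos
    refine h.congr_fun (fun y (hy : 1 < y) => ?_) measurableSet_Ioi
    have hy1 : 1 ≤ y ^ 2 := one_le_pow₀ hy.le
    simp only [min_eq_left hy1, one_mul]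

section Rescaling

variable {E : Type*} [NormedAddCommGroup E] [NormedSpace ℝ E] {α s v M K : ℝ} {f : ℝ → ℝ}
  {g : ℝ → E}

theorem tendsto_rpow_smul_integral_comp_div_zero (hα : 0 < α) (hf : Integrable f)
    (hg : ∀ v, ‖g v‖ ≤ K) :
    Tendsto (fun s : ℝ => s ^ α • ∫ u, f u • g (u / s)) (𝓝[>] 0) (𝓝 0) := by
  have h_zero : Tendsto (fun s : ℝ => s ^ α) (𝓝[>] 0) (𝓝 0) :=
    tendsto_nhds_of_tendsto_nhdsWithin (tendsto_rpow_nhdsGT_zero hα)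
  refine h_zero.zero_smul_isBoundedUnder_le
    (isBoundedUnder_of ⟨∫ u, ‖f u‖ * K, fun s => ?_⟩)
  refine norm_integral_le_of_norm_le (hf.norm.mul_const K) (Eventually.of_forall fun u => ?_)
  rw [norm_smul]
  gcongr
  exact hg _

theorem rpow_smul_integral_smul_comp_div (α : ℝ) (hs : 0 < s) (f : ℝ → ℝ) (g : ℝ → E) :
    s ^ α • ∫ u, f u • g (u / s) = ∫ v, (s ^ (α + 1) * f (s * v)) • g v := by
  have h_subst := Measure.integral_comp_div (fun v => f (s * v) • g v) s
  simp only [mul_div_cancel₀ _ hs.ne'] at h_subst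
  simp only [h_subst, mul_smul, integral_smul, abs_of_pos hs, rpow_add_one hs.ne']

theorem rpow_add_one_eq_abs_rpow_mul (α : ℝ) (hs : 0 < s) (hv : v ≠ 0) :
    s ^ (α + 1) = |v| ^ (-α - 1) * |s * v| ^ (α + 1) := by
  have hv' : 0 < |v| := abs_pos.2 hv
  have h_cancel : |v| ^ (-α - 1) * |v| ^ (α + 1) = 1 := by
    rw [← rpow_add hv']
    simp
  rw [abs_mul, abs_of_pos hs, mul_rpow hs.le hv'.le, mul_left_comm, h_cancel, mul_one]

theorem norm_rescaled_smul_le (hs : 0 < s) (hv : v ≠ 0) (hf : ∀ u, |u| ^ (α + 1) * |f u| ≤ M)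
    (hg : ∀ v, ‖g v‖ ≤ K * min 1 (v ^ 2)) :
    ‖(s ^ (α + 1) * f (s * v)) • g v‖ ≤ M * K * (min 1 (v ^ 2) * |v| ^ (-α - 1)) := by
  have hM : 0 ≤ M := le_trans (by positivity) (hf 0)
  calc ‖(s ^ (α + 1) * f (s * v)) • g v‖
      = |v| ^ (-α - 1) * (|s * v| ^ (α + 1) * |f (s * v)|) * ‖g v‖ := by
        rw [norm_smul, norm_mul, norm_of_nonneg (by positivity),
          rpow_add_one_eq_abs_rpow_mul α hs hv, norm_eq_abs, mul_assoc (_ ^ _)]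
    _ ≤ |v| ^ (-α - 1) * M * (K * min 1 (v ^ 2)) := by
        gcongr
        exacts [hf _, hg v]
    _ = M * K * (min 1 (v ^ 2) * |v| ^ (-α - 1)) := by ring

theorem integrable_rescaled_smul (hα : α ∈ Ioo (0 : ℝ) 2) (hs : 0 < s) (hf_meas : Measurable f)
    (hf : ∀ u, |u| ^ (α + 1) * |f u| ≤ M) (hg_meas : StronglyMeasurable g)
    (hg : ∀ v, ‖g v‖ ≤ K * min 1 (v ^ 2)) :
    Integrable fun v => (s ^ (α + 1) * f (s * v)) • g v := by
  have h_density : Measurable fun v => s ^ (α + 1) * f (s * v) := by fun_prop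
  refine ((integrable_min_one_sq_mul_abs_rpow hα).const_mul (M * K)).mono'
    (h_density.stronglyMeasurable.smul hg_meas).aestronglyMeasurable ?_
  filter_upwards [Measure.ae_ne volume (0 : ℝ)] with v hv
  exact norm_rescaled_smul_le hs hv hf hg

theorem integrable_smul_comp_div_of_le (hα : α ∈ Ioo (0 : ℝ) 2) (hs : 0 < s)
    (hf_meas : Measurable f) (hf : ∀ u, |u| ^ (α + 1) * |f u| ≤ M)
    (hg_meas : StronglyMeasurable g) (hg : ∀ v, ‖g v‖ ≤ K * min 1 (v ^ 2)) :
    Integrable fun u => f u • g (u / s) := by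
  have h_unscaled := ((integrable_rescaled_smul hα hs hf_meas hf hg_meas hg).comp_div
    hs.ne').smul (s ^ (α + 1))⁻¹
  simpa only [mul_div_cancel₀ _ hs.ne', Pi.smul_def, smul_smul,
    inv_mul_cancel_left₀ (rpow_pos_of_pos hs (α + 1)).ne'] using h_unscaled

variable {Cp Cm : ℝ}

theorem tendsto_rescaled_stableDensity
    (hp : Tendsto (fun u => |u| ^ (α + 1) * f u) (𝓝[>] 0) (𝓝 Cp))
    (hm : Tendsto (fun u => |u| ^ (α + 1) * f u) (𝓝[<] 0) (𝓝 Cm)) (hv : v ≠ 0) :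
    Tendsto (fun s : ℝ => s ^ (α + 1) * f (s * v)) (𝓝[>] 0) (𝓝 (stableDensity α Cp Cm v)) := by
  have h_zero : Tendsto (fun s : ℝ => s * v) (𝓝[>] 0) (𝓝 0) := by
    simpa using (tendsto_id.mono_left nhdsWithin_le_nhds : Tendsto id (𝓝[>] (0 : ℝ)) _).mul_const v
  suffices h : Tendsto (fun s : ℝ => |v| ^ (-α - 1) * (|s * v| ^ (α + 1) * f (s * v))) (𝓝[>] 0)
      (𝓝 (stableDensity α Cp Cm v)) by
    refine h.congr' ?_
    filter_upwards [self_mem_nhdsWithin] with s hs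
    rw [rpow_add_one_eq_abs_rpow_mul α hs hv, mul_assoc]
  rcases hv.lt_or_gt with hv | hv
  · rw [stableDensity, if_neg hv.not_gt, mul_comm Cm]
    refine (hm.comp (tendsto_nhdsWithin_iff.2 ⟨h_zero, ?_⟩)).const_mul _
    filter_upwards [self_mem_nhdsWithin] with s hs using mul_neg_of_pos_of_neg hs hv
  · rw [stableDensity, if_pos hv, mul_comm Cp]
    refine (hp.comp (tendsto_nhdsWithin_iff.2 ⟨h_zero, ?_⟩)).const_mul _
    filter_upwards [self_mem_nhdsWithin] with s hs using mul_pos hs hv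

theorem tendsto_rpow_smul_integral_comp_div_of_le (hα : α ∈ Ioo (0 : ℝ) 2) (hf_meas : Measurable f)
    (hf : ∀ u, |u| ^ (α + 1) * |f u| ≤ M)
    (hp : Tendsto (fun u => |u| ^ (α + 1) * f u) (𝓝[>] 0) (𝓝 Cp))
    (hm : Tendsto (fun u => |u| ^ (α + 1) * f u) (𝓝[<] 0) (𝓝 Cm))
    (hg_meas : StronglyMeasurable g) (hg : ∀ v, ‖g v‖ ≤ K * min 1 (v ^ 2)) :
    Tendsto (fun s : ℝ => s ^ α • ∫ u, f u • g (u / s)) (𝓝[>] 0)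
      (𝓝 (∫ v, stableDensity α Cp Cm v • g v)) := by
  suffices h : Tendsto (fun s : ℝ => ∫ v, (s ^ (α + 1) * f (s * v)) • g v) (𝓝[>] 0)
      (𝓝 (∫ v, stableDensity α Cp Cm v • g v)) by
    refine h.congr' ?_
    filter_upwards [self_mem_nhdsWithin] with s hs
    exact (rpow_smul_integral_smul_comp_div α hs f g).symm
  refine tendsto_integral_filter_of_dominated_convergence _ ?_ ?_
    ((integrable_min_one_sq_mul_abs_rpow hα).const_mul (M * K)) ?_
  · filter_upwards [self_mem_nhdsWithin] with s hs
    exact (integrable_rescaled_smul hα hs hf_meas hf hg_meas hg).aestronglyMeasurable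
  · filter_upwards [self_mem_nhdsWithin] with s hs
    filter_upwards [Measure.ae_ne volume (0 : ℝ)] with v hv
    exact norm_rescaled_smul_le hs hv hf hg
  · filter_upwards [Measure.ae_ne volume (0 : ℝ)] with v hv
    exact (tendsto_rescaled_stableDensity hp hm hv).smul_const (g v)

end Rescaling

/-- Condition H1: `m` is a Lévy density whose behaviour at the origin is that of the `α`-stable
density with constants `Cp` on the right and `Cm` on the left. -/
structure IsLocallyStable (α Cp Cm : ℝ) (m : ℝ → ℝ) : Prop where
  measurable : Measurable m
  nonneg : ∀ u, 0 ≤ m u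
  integrable : Integrable fun u => min 1 (u ^ 2) * m u
  tendsto_right : Tendsto (fun u => u ^ (α + 1) * m u) (𝓝[>] 0) (𝓝 Cp)
  tendsto_left : Tendsto (fun u => |u| ^ (α + 1) * m u) (𝓝[<] 0) (𝓝 Cm)

namespace IsLocallyStable

variable {E : Type*} [NormedAddCommGroup E] [NormedSpace ℝ E] {α Cp Cm K δ : ℝ} {m : ℝ → ℝ}
  {g : ℝ → E}

theorem tendsto_abs_right (h : IsLocallyStable α Cp Cm m) :
    Tendsto (fun u => |u| ^ (α + 1) * m u) (𝓝[>] 0) (𝓝 Cp) := by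
  refine h.tendsto_right.congr' ?_
  filter_upwards [self_mem_nhdsWithin] with u hu
  rw [abs_of_pos hu]

theorem exists_forall_closedBall_le (h : IsLocallyStable α Cp Cm m) (hα : 0 < α) :
    ∃ δ > 0, ∃ M, ∀ u ∈ Metric.closedBall (0 : ℝ) δ, |u| ^ (α + 1) * m u ≤ M := by
  have h_bigO : (fun u => |u| ^ (α + 1) * m u) =O[𝓝[≠] 0] fun _ => (1 : ℝ) := by
    rw [← nhdsLT_sup_nhdsGT]
    exact (h.tendsto_left.isBigO_one ℝ).sup (h.tendsto_abs_right.isBigO_one ℝ)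
  obtain ⟨M, hM, h_bound⟩ := h_bigO.exists_pos
  obtain ⟨δ, hδ, h_ball⟩ := Metric.nhds_basis_closedBall.eventually_iff.1
    (eventually_nhdsWithin_iff.1 h_bound.bound)
  refine ⟨δ, hδ, M, fun u hu => ?_⟩
  rcases eq_or_ne u 0 with rfl | hu0
  · simpa [zero_rpow (by positivity : α + 1 ≠ 0)] using hM.le
  · simpa using (le_abs_self _).trans (h_ball hu hu0)

theorem integrable_indicator_compl_closedBall (h : IsLocallyStable α Cp Cm m) (hδ : 0 < δ) :
    Integrable ((Metric.closedBall 0 δ)ᶜ.indicator m) := by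
  refine (h.integrable.const_mul (min 1 (δ ^ 2))⁻¹).mono'
    (h.measurable.indicator measurableSet_closedBall.compl).aestronglyMeasurable
    (Eventually.of_forall fun u => ?_)
  have hm := h.nonneg u
  rw [norm_of_nonneg (indicator_nonneg (fun u _ => h.nonneg u) u)]
  refine indicator_apply_le' (fun hu => ?_) fun _ => by positivity
  have hδu : δ ≤ |u| := by simpa using (le_of_lt (not_le.1 hu) : δ ≤ dist u 0)
  rw [le_inv_mul_iff₀ (by positivity), ← sq_abs u]
  gcongr

theorem tendsto_rpow_smul_integral_comp_div (h : IsLocallyStable α Cp Cm m)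
    (hα : α ∈ Ioo (0 : ℝ) 2) (hg_meas : StronglyMeasurable g)
    (hg : ∀ v, ‖g v‖ ≤ K * min 1 (v ^ 2)) :
    Tendsto (fun s : ℝ => s ^ α • ∫ u, m u • g (u / s)) (𝓝[>] 0)
      (𝓝 (∫ v, stableDensity α Cp Cm v • g v)) := by
  obtain ⟨δ, hδ, M, hM⟩ := h.exists_forall_closedBall_le hα.1
  set B : Set ℝ := Metric.closedBall 0 δ
  have hK : 0 ≤ K := by simpa using (norm_nonneg _).trans (hg 1)
  have hg_le : ∀ v, ‖g v‖ ≤ K := fun v =>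
    (hg v).trans (mul_le_of_le_one_right hK (min_le_left _ _))
  have hB_meas : Measurable (B.indicator m) := h.measurable.indicator measurableSet_closedBall
  have hB_le : ∀ u, |u| ^ (α + 1) * |B.indicator m u| ≤ max M 0 := fun u => by
    by_cases hu : u ∈ B
    · simpa [hu, abs_of_nonneg (h.nonneg u)] using Or.inl (hM u hu)
    · simp [hu]
  have hB_eq : (fun u => |u| ^ (α + 1) * m u) =ᶠ[𝓝 0]
      fun u => |u| ^ (α + 1) * B.indicator m u := by
    filter_upwards [Metric.closedBall_mem_nhds 0 hδ] with u hu
    rw [indicator_of_mem hu]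
  have small_jumps := tendsto_rpow_smul_integral_comp_div_of_le hα hB_meas hB_le
    (h.tendsto_abs_right.congr' (hB_eq.filter_mono nhdsWithin_le_nhds))
    (h.tendsto_left.congr' (hB_eq.filter_mono nhdsWithin_le_nhds)) hg_meas hg
  have hBc_int := h.integrable_indicator_compl_closedBall hδ
  have large_jumps := tendsto_rpow_smul_integral_comp_div_zero hα.1 hBc_int hg_le
  rw [← add_zero (∫ v, _)]
  refine (small_jumps.add large_jumps).congr' ?_
  filter_upwards [self_mem_nhdsWithin] with s hs
  have h_int_large : Integrable fun u => Bᶜ.indicator m u • g (u / s) :=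
    hBc_int.smul_bdd K
      (hg_meas.comp_measurable (measurable_id.div_const s)).aestronglyMeasurable
      (Eventually.of_forall fun u => hg_le _)
  rw [← smul_add, ← integral_add
    (integrable_smul_comp_div_of_le hα hs hB_meas hB_le hg_meas hg) h_int_large]
  simp only [← add_smul, indicator_self_add_compl_apply]

end IsLocallyStable

theorem norm_exp_I_mul_sub_one_sub_le (x : ℝ) :
    ‖Complex.exp (Complex.I * x) - 1 - Complex.I * x‖ ≤ x ^ 2 := by
  have h_deriv : ∀ y ∈ uIcc 0 x, HasDerivWithinAt
      (fun y : ℝ => Complex.exp (Complex.I * y) - Complex.I * y)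
      (Complex.I * (Complex.exp (Complex.I * y) - 1)) (uIcc 0 x) y := fun y _ => by
    have h_lin : HasDerivAt (fun y : ℝ => Complex.I * (y : ℂ)) Complex.I y := by
      simpa using (Complex.ofRealCLM.hasDerivAt (x := y)).const_mul Complex.I
    exact ((h_lin.cexp.sub h_lin).congr_deriv (by ring)).hasDerivWithinAt
  have h_bound : ∀ y ∈ uIcc 0 x, ‖Complex.I * (Complex.exp (Complex.I * y) - 1)‖ ≤ |x| :=
    fun y hy => by
      rw [norm_mul, Complex.norm_I, one_mul]
      exact norm_exp_I_mul_ofReal_sub_one_le.trans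
        (by simpa using abs_sub_left_of_mem_uIcc hy)
  have h_mvt := (convex_uIcc 0 x).norm_image_sub_le_of_norm_hasDerivWithin_le h_deriv h_bound
    left_mem_uIcc right_mem_uIcc
  calc ‖Complex.exp (Complex.I * x) - 1 - Complex.I * x‖ ≤ |x| * |x| := by
        simpa [sub_right_comm] using h_mvt
    _ = x ^ 2 := by rw [abs_mul_abs_self, sq]

/-- The compensated exponential `v ↦ exp (iλv) - 1 - iλv 1_{|v| ≤ 1}` of the Lévy–Khintchine
formula. -/
noncomputable def levyKernel (lam v : ℝ) : ℂ :=
  Complex.exp (Complex.I * ((lam * v : ℝ) : ℂ)) - 1 -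
    Complex.I * ((lam * v : ℝ) : ℂ) * (if |v| ≤ 1 then (1 : ℂ) else 0)

theorem measurable_levyKernel (lam : ℝ) : Measurable (levyKernel lam) := by
  have h_ite : Measurable fun v : ℝ => if |v| ≤ 1 then (1 : ℂ) else 0 :=
    .ite (measurableSet_le (by fun_prop) (by fun_prop)) measurable_const measurable_const
  unfold levyKernel
  fun_prop

theorem norm_levyKernel_le (lam v : ℝ) : ‖levyKernel lam v‖ ≤ (2 + lam ^ 2) * min 1 (v ^ 2) := by
  unfold levyKernel
  split_ifs with hv
  · rw [min_eq_right ((sq_le_one_iff_abs_le_one v).2 hv), mul_one]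
    refine (norm_exp_I_mul_sub_one_sub_le (lam * v)).trans ?_
    nlinarith [sq_nonneg v]
  · rw [min_eq_left ((one_lt_sq_iff_one_lt_abs v).2 (not_le.1 hv)).le, mul_zero, sub_zero, mul_one]
    calc ‖Complex.exp (Complex.I * ((lam * v : ℝ) : ℂ)) - 1‖
        ≤ ‖Complex.exp (Complex.I * ((lam * v : ℝ) : ℂ))‖ + ‖(1 : ℂ)‖ := norm_sub_le _ _
      _ = 2 := by rw [Complex.norm_exp_I_mul_ofReal, norm_one, one_add_one_eq_two]
      _ ≤ 2 + lam ^ 2 := le_add_of_nonneg_right (sq_nonneg lam)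

theorem psiLimit_eq_integral_levyKernel (α Cp Cm lam : ℝ) :
    psiLimit α Cp Cm lam = ∫ v, stableDensity α Cp Cm v • levyKernel lam v := by
  simp only [psiLimit, levyKernel, Complex.real_smul, mul_comm]

theorem psiT_eq_integral_levyKernel (m : ℝ → ℝ) (α lam : ℝ) {t : ℝ} (ht : 0 < t) :
    psiT m α t lam = t • ∫ u, m u • levyKernel lam (u / t ^ (1 / α)) := by
  have hs : 0 < t ^ (1 / α) := rpow_pos_of_pos ht _
  have h_arg (u : ℝ) : lam * t ^ (-1 / α) * u = lam * (u / t ^ (1 / α)) := by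
    rw [neg_div, rpow_neg ht.le]
    ring
  have h_trunc (u : ℝ) : |u| ≤ t ^ (1 / α) ↔ |u / t ^ (1 / α)| ≤ 1 := by
    rw [abs_div, abs_of_pos hs, div_le_one hs]
  simp only [psiT, levyKernel, Complex.real_smul, h_arg, h_trunc, mul_comm ((m _ : ℝ) : ℂ)]

theorem IsLocallyStable.tendsto_psiT {α Cp Cm : ℝ} {m : ℝ → ℝ} (h : IsLocallyStable α Cp Cm m)
    (hα : α ∈ Ioo (0 : ℝ) 2) (lam : ℝ) :
    Tendsto (fun t => psiT m α t lam) (𝓝[>] 0) (𝓝 (psiLimit α Cp Cm lam)) := by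
  rw [psiLimit_eq_integral_levyKernel]
  refine ((h.tendsto_rpow_smul_integral_comp_div hα (measurable_levyKernel lam).stronglyMeasurable
    (norm_levyKernel_le lam)).comp (tendsto_rpow_nhdsGT_zero (one_div_pos.2 hα.1))).congr' ?_
  filter_upwards [self_mem_nhdsWithin] with t (ht : 0 < t)
  have h_time : (t ^ (1 / α)) ^ α = t := by
    rw [← rpow_mul ht.le, one_div_mul_cancel hα.1.ne', rpow_one]
  simp only [Function.comp_apply, h_time, psiT_eq_integral_levyKernel m α lam ht]

/-- Under condition H1, if `ρ_t` and `ρ` are Borel probability measures on `ℝ` whose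
characteristic functions equal `exp (ψ_{α,t} λ)` and `exp (ψ_{α,C±} λ)` respectively, then
`ρ_t` converges weakly to `ρ` as `t → 0+`. -/
theorem statement1 (α Cp Cm : ℝ) (hα : α ∈ Set.Ioo (0 : ℝ) 2)
    (hCp0 : 0 ≤ Cp) (hCm0 : 0 ≤ Cm) (hC : 0 < Cp + Cm)
    (m : ℝ → ℝ) (hm_meas : Measurable m) (hm_nonneg : ∀ u, 0 ≤ m u)
    (hm_int : Integrable (fun u => min 1 (u ^ 2) * m u))
    (hlimp : Tendsto (fun u => u ^ (α + 1) * m u) (𝓝[>] (0 : ℝ)) (𝓝 Cp))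
    (hlimm : Tendsto (fun u => |u| ^ (α + 1) * m u) (𝓝[<] (0 : ℝ)) (𝓝 Cm))
    (ρt : ℝ → ProbabilityMeasure ℝ) (ρ : ProbabilityMeasure ℝ)
    (hρt : ∀ t ∈ Set.Ioc (0 : ℝ) 1, ∀ lam : ℝ,
      (∫ x : ℝ, Complex.exp (Complex.I * ((lam * x : ℝ) : ℂ)) ∂(ρt t : Measure ℝ))
        = Complex.exp (psiT m α t lam))
    (hρ : ∀ lam : ℝ,
      (∫ x : ℝ, Complex.exp (Complex.I * ((lam * x : ℝ) : ℂ)) ∂(ρ : Measure ℝ))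
        = Complex.exp (psiLimit α Cp Cm lam)) :
    Tendsto ρt (𝓝[Set.Ioc (0 : ℝ) 1] 0) (𝓝 ρ) := by
  have hm : IsLocallyStable α Cp Cm m := ⟨hm_meas, hm_nonneg, hm_int, hlimp, hlimm⟩
  refine tendsto_probabilityMeasure_of_tendsto_charFun fun lam => ?_
  rw [charFun_eq_integral_exp_I_mul, hρ lam]
  have h_exp : Tendsto (fun t => Complex.exp (psiT m α t lam)) (𝓝[Ioc 0 1] 0)
      (𝓝 (Complex.exp (psiLimit α Cp Cm lam))) := by
    rw [nhdsWithin_Ioc_eq_nhdsGT one_pos]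
    exact (hm.tendsto_psiT hα lam).cexp
  refine h_exp.congr' ?_
  filter_upwards [self_mem_nhdsWithin] with t ht
  rw [charFun_eq_integral_exp_I_mul, hρt t ht lam]
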